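/- Let ξ be a real irrational number. Then τ'''(ξ) = τ''(ξ) = τ'(ξ) = τ(ξ) = 1/(μ(ξ) − 1), and this common value lies in [0, 1]. Here T(ξ) is the set of τ > 0 for which there exist integer sequences (u_n), (v_n) with u_n ≠ 0, u_n ξ − v_n → 0, |u_{n+1} ξ − v_{n+1}| = |u_n ξ − v_n|^{1+o(1)} and |u_n ξ − v_n| ≤ |u_n|^{−τ+o(1)}; T'(ξ) is the set of τ > 0 for which there exist integer sequences (u_n), (v_n) and reals 0 < α < 1 < β with |u_n ξ − v_n|^{1/n} → α, limsup |u_n|^{1/n} ≤ β and τ = −(log α)/(log β); T''(ξ) is the set of τ > 0 such that for every increasing sequence (Q_n) of positive integers there exist integer sequences (u_n), (v_n) with |u_n| ≤ Q_n^{1+o(1)} and |u_n ξ − v_n| = Q_n^{−τ+o(1)}; T'''(ξ) is the set of τ > 0 such that for all sequences (Q_n), (ε_n) of positive reals with Q_n → +∞, ε_n → 0 and ε_n ≥ Q_n^{−τ+o(1)}, there exist integer sequences (u_n), (v_n) with u_n/Q_n → 1 and (u_n ξ − v_n)/ε_n → 1; and τ(ξ), τ'(ξ), τ''(ξ), τ'''(ξ)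 are the suprema of these sets (sup ∅ = 0). -/

import Mathlib

/-!
Let `S` be the set of real `μ` such that `|ξ - p/q| > 1/q^μ` for all large `q` and all `p`
(`TauExp.expSet`), so that `μ(ξ) = inf S`. Dirichlet's theorem gives `S ⊆ [2, ∞)`.

The proof rests on a chain of inclusions `T''' ⊆ T'' ⊆ T' ⊆ T`. For the first one takes
`ε_n = Q_n^{-τ}`, for the second `Q_n = 2^n`, and the third is a comparison of logarithms. It then
suffices to bound the largest set from above and the smallest one from below.

* If `τ ∈ T`, then every `μ > 1 + 1/τ` lies in `S` (`TauExp.mem_expSet_of_mem_TSet`). Given a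
  fraction `p/q`, choose `n` with `|u_n ξ - v_n| < 1/(2q) ≤ |u_{n-1} ξ - v_{n-1}|`. Whether or not
  `p/q = v_n/u_n`, one has `|ξ - p/q| ≥ |u_n ξ - v_n| / |u_n|`, and the right-hand side is at least
  `q^{-1-1/τ-o(1)}`.
* If `μ ∈ S`, `τ > 0` and `τ (μ - 1) < 1`, then `τ ∈ T'''` (`TauExp.mem_TSet'''`). Dirichlet's
  theorem gives a reduced fraction `p/q`, with `q` at most slightly larger than `1/ε_n`, for which
  `δ = q ξ - p` is small compared with `ε_n`. As `μ ∈ S`, one has `1/|δ| = O(q^{μ-1})`, and so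
  `1/|δ| + q = o(Q_n)`. The lattice of points `(u, u ξ - v)` meets every box of half-sides
  `1/|δ| + q` and `|δ|` (`TauExp.exists_near`), in particular the one centred at `(Q_n, ε_n)`.

Hence any set `X` with `T''' ⊆ X ⊆ T` has supremum `1/(inf S - 1)` when `S` is nonempty, and is
empty when `S` is empty, that is, when `μ(ξ) = ⊤`.
-/


open Filter Topology

/-- The irrationality exponent of a real number, as an extended real:
the infimum of all real `μ` such that `|ξ - p/q| > 1/q^μ` for all integers `p, q`
with `q` sufficiently large (`⊤` if no such real `μ` exists). -/
noncomputable def irrationalityExponent (ξ : ℝ) : EReal :=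
  sInf {x : EReal | ∃ μ : ℝ, x = (μ : EReal) ∧
    ∀ᶠ q : ℕ in atTop, ∀ p : ℤ, |ξ - (p : ℝ) / (q : ℝ)| > 1 / (q : ℝ) ^ μ}

/-- The set `T(ξ)` of all `τ > 0` for which there exist integer sequences `(u_n)`, `(v_n)`
with `u_n ≠ 0`, `u_n ξ - v_n → 0`, `|u_{n+1} ξ - v_{n+1}| = |u_n ξ - v_n|^{1+o(1)}` and
`|u_n ξ - v_n| ≤ |u_n|^{-τ+o(1)}`. -/
def TSet (ξ : ℝ) : Set ℝ :=
  {τ : ℝ | 0 < τ ∧ ∃ u v : ℕ → ℤ, (∀ n, u n ≠ 0) ∧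
    Tendsto (fun n => (u n : ℝ) * ξ - (v n : ℝ)) atTop (𝓝 0) ∧
    (∃ δ : ℕ → ℝ, Tendsto δ atTop (𝓝 0) ∧ ∀ n,
      |(u (n + 1) : ℝ) * ξ - (v (n + 1) : ℝ)| = |(u n : ℝ) * ξ - (v n : ℝ)| ^ (1 + δ n)) ∧
    (∃ δ : ℕ → ℝ, Tendsto δ atTop (𝓝 0) ∧ ∀ n,
      |(u n : ℝ) * ξ - (v n : ℝ)| ≤ |(u n : ℝ)| ^ (-τ + δ n))}

/-- The set `T'(ξ)` of all `τ > 0` for which there exist integer sequences `(u_n)`, `(v_n)`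
and `0 < α < 1 < β` with `|u_n ξ - v_n|^{1/n} → α`, `limsup |u_n|^{1/n} ≤ β` and
`τ = -log α / log β`. -/
def TSet' (ξ : ℝ) : Set ℝ :=
  {τ : ℝ | 0 < τ ∧ ∃ u v : ℕ → ℤ, ∃ α β : ℝ, 0 < α ∧ α < 1 ∧ 1 < β ∧
    Tendsto (fun n => |(u n : ℝ) * ξ - (v n : ℝ)| ^ (1 / (n : ℝ))) atTop (𝓝 α) ∧
    limsup (fun n => ((|(u n : ℝ)| ^ (1 / (n : ℝ)) : ℝ) : EReal)) atTop ≤ (β : EReal) ∧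
    τ = -Real.log α / Real.log β}

/-- The set `T''(ξ)` of all `τ > 0` such that, for any increasing sequence `(Q_n)` of
positive integers, there exist integer sequences `(u_n)`, `(v_n)` with
`|u_n| ≤ Q_n^{1+o(1)}` and `|u_n ξ - v_n| = Q_n^{-τ+o(1)}`. -/
def TSet'' (ξ : ℝ) : Set ℝ :=
  {τ : ℝ | 0 < τ ∧ ∀ Q : ℕ → ℕ, StrictMono Q → (∀ n, 0 < Q n) →
    ∃ u v : ℕ → ℤ,
      (∃ δ : ℕ → ℝ, Tendsto δ atTop (𝓝 0) ∧ ∀ n,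
        |(u n : ℝ)| ≤ (Q n : ℝ) ^ (1 + δ n)) ∧
      (∃ δ : ℕ → ℝ, Tendsto δ atTop (𝓝 0) ∧ ∀ n,
        |(u n : ℝ) * ξ - (v n : ℝ)| = (Q n : ℝ) ^ (-τ + δ n))}

/-- The set `T'''(ξ)` of all `τ > 0` such that, for any sequences `(Q_n)`, `(ε_n)` of
positive real numbers with `Q_n → ∞`, `ε_n → 0` and `ε_n ≥ Q_n^{-τ+o(1)}`, there exist
integer sequences `(u_n)`, `(v_n)` with `u_n / Q_n → 1` and `(u_n ξ - v_n)/ε_n → 1`. -/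
def TSet''' (ξ : ℝ) : Set ℝ :=
  {τ : ℝ | 0 < τ ∧ ∀ Q ε : ℕ → ℝ, (∀ n, 0 < Q n) → (∀ n, 0 < ε n) →
    Tendsto Q atTop atTop → Tendsto ε atTop (𝓝 0) →
    (∃ δ : ℕ → ℝ, Tendsto δ atTop (𝓝 0) ∧ ∀ n, ε n ≥ Q n ^ (-τ + δ n)) →
    ∃ u v : ℕ → ℤ,
      Tendsto (fun n => (u n : ℝ) / Q n) atTop (𝓝 1) ∧
      Tendsto (fun n => ((u n : ℝ) * ξ - (v n : ℝ)) / ε n) atTop (𝓝 1)}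

/-- `τ(ξ) = sup T(ξ)` (with `sup ∅ = 0`, as for the real `sSup`). -/
noncomputable def tauExp (ξ : ℝ) : ℝ := sSup (TSet ξ)

/-- `τ'(ξ) = sup T'(ξ)` (with `sup ∅ = 0`, as for the real `sSup`). -/
noncomputable def tauExp' (ξ : ℝ) : ℝ := sSup (TSet' ξ)

/-- `τ''(ξ) = sup T''(ξ)` (with `sup ∅ = 0`, as for the real `sSup`). -/
noncomputable def tauExp'' (ξ : ℝ) : ℝ := sSup (TSet'' ξ)

/-- `τ'''(ξ) = sup T'''(ξ)` (with `sup ∅ = 0`, as for the real `sSup`). -/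
noncomputable def tauExp''' (ξ : ℝ) : ℝ := sSup (TSet''' ξ)

namespace TauExp

/-! ### Lattice points near a target, and the lower bound -/

/-- The real exponents over which the infimum defining `irrationalityExponent` is taken. -/
def expSet (ξ : ℝ) : Set ℝ :=
  {μ : ℝ | ∀ᶠ q : ℕ in atTop, ∀ p : ℤ, |ξ - (p : ℝ) / (q : ℝ)| > 1 / (q : ℝ) ^ μ}

lemma mul_sub_ne_zero {ξ : ℝ} (hξ : Irrational ξ) {u : ℤ} (hu : u ≠ 0) (v : ℤ) :
    (u : ℝ) * ξ - v ≠ 0 := by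
  intro h
  exact (hξ.intCast_mul hu).ne_int v (sub_eq_zero.mp h)

/-- The lattice of points `(u, u ξ - v)` meets every box of half-sides `1/|δ| + q` and `|δ|`, where
`δ = q ξ - p` for a reduced fraction `r = p/q`. Indeed `q (u ξ - v) = u δ + w` with `w = u p - v q`,
and any integers `u`, `w` with `u p ≡ w` modulo `q` can occur. Take for `w` an integer near
`q ε - Q δ`, and then `u` in the right residue class. -/
lemma exists_near {ξ : ℝ} (r : ℚ) (hδ : (r.den : ℝ) * ξ - r.num ≠ 0) (Q ε : ℝ) :
    ∃ u v : ℤ, |(u : ℝ) - Q| ≤ 1 / |(r.den : ℝ) * ξ - r.num| + r.den ∧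
      |(u : ℝ) * ξ - v - ε| ≤ |(r.den : ℝ) * ξ - r.num| := by
  have hcop : IsCoprime r.num (r.den : ℤ) := by
    rw [Int.isCoprime_iff_gcd_eq_one]
    exact r.reduced
  obtain ⟨a, b, hab⟩ := hcop
  have hab' : (a : ℝ) * r.num + b * r.den = 1 := by exact_mod_cast hab
  have hq : (0 : ℝ) < r.den := by exact_mod_cast r.den_pos
  set q : ℝ := (r.den : ℝ) with hqdef
  set p : ℝ := (r.num : ℝ) with hpdef
  set δ : ℝ := q * ξ - p with hδdef
  set w : ℤ := ⌊q * ε - Q * δ⌋ with hw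
  -- the abscissa at which the line `U * δ + w = q * ε` is met
  set U : ℝ := (q * ε - w) / δ with hU
  set k : ℤ := ⌈(U - w * a) / q⌉ with hk
  have hUδ : U * δ = q * ε - w := by rw [hU]; field_simp
  have hk1 : U - w * a ≤ q * k := by
    have := Int.le_ceil ((U - w * a) / q)
    rw [div_le_iff₀ hq] at this
    linarith
  have hk2 : q * k ≤ U - w * a + q := by
    have := (Int.ceil_lt_add_one ((U - w * a) / q)).le
    rw [← hk, ← sub_le_iff_le_add, le_div_iff₀ hq] at this
    linarith
  have hUQ : |U - Q| ≤ 1 / |δ| := by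
    rw [le_div_iff₀ (abs_pos.mpr hδ), ← abs_mul, abs_le]
    have h1 := Int.floor_le (q * ε - Q * δ)
    have h2 := Int.lt_floor_add_one (q * ε - Q * δ)
    rw [← hw] at h1 h2
    constructor <;> nlinarith
  refine ⟨w * a + r.den * k, k * r.num - w * b, ?_, ?_⟩
  · push_cast
    rw [← hqdef]
    have h3 : |w * a + q * k - U| ≤ q := by rw [abs_le]; constructor <;> linarith
    calc |w * a + q * k - Q| = |(U - Q) + (w * a + q * k - U)| := by ring_nf
      _ ≤ |U - Q| + |w * a + q * k - U| := abs_add_le _ _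
      _ ≤ _ := by linarith
  · push_cast
    rw [← hqdef, ← hpdef]
    have h3 : |w * a + q * k - U| ≤ q := by rw [abs_le]; constructor <;> linarith
    have h4 : ((w * a + q * k) * ξ - (k * p - w * b) - ε) * q = (w * a + q * k - U) * δ := by
      have hξ : q * ξ = δ + p := by rw [hδdef]; ring
      linear_combination (w * a + q * k) * hξ + hUδ + w * hab'
    refine le_of_mul_le_mul_right ?_ hq
    rw [← abs_of_pos hq, ← abs_mul, abs_of_pos hq, h4, abs_mul, mul_comm]
    gcongr

/-- A constant absorbs the finitely many denominators for which the bound defining `expSet` is not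
assumed. -/
lemma exists_lower_bound {ξ μ : ℝ} (hξ : Irrational ξ) (hμ : μ ∈ expSet ξ) :
    ∃ c > 0, ∀ q : ℕ, 1 ≤ q → ∀ p : ℤ, c * (q : ℝ) ^ (1 - μ) ≤ |(q : ℝ) * ξ - p| := by
  obtain ⟨N, hN⟩ := eventually_atTop.mp hμ
  have hfin : ∀ M : ℕ, ∃ c > 0, ∀ q : ℕ, 1 ≤ q → q < M → ∀ p : ℤ,
      c * (q : ℝ) ^ (1 - μ) ≤ |(q : ℝ) * ξ - p| := by
    intro M
    induction M with
    | zero => exact ⟨1, one_pos, fun q _ h => absurd h (Nat.not_lt_zero q)⟩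
    | succ M ih =>
      obtain ⟨c, hc, h⟩ := ih
      rcases Nat.eq_zero_or_pos M with rfl | hM
      · exact ⟨1, one_pos, fun q h1 h2 => by omega⟩
      have hM' : (0 : ℝ) < M := by exact_mod_cast hM
      have hpos : 0 < |(M : ℝ) * ξ - round ((M : ℝ) * ξ)| := by
        have := mul_sub_ne_zero hξ (u := M) (by omega) (round ((M : ℝ) * ξ))
        exact abs_pos.mpr (by exact_mod_cast this)
      refine ⟨min c (|(M : ℝ) * ξ - round ((M : ℝ) * ξ)| / (M : ℝ) ^ (1 - μ)),
        lt_min hc (by positivity), fun q h1 h2 p => ?_⟩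
      rcases Nat.lt_succ_iff_lt_or_eq.mp h2 with h2 | rfl
      · exact (mul_le_mul_of_nonneg_right (min_le_left _ _) (by positivity)).trans (h q h1 h2 p)
      · refine (mul_le_mul_of_nonneg_right (min_le_right _ _) (by positivity)).trans ?_
        rw [div_mul_cancel₀ _ (by positivity)]
        exact round_le _ _
  obtain ⟨c, hc, h⟩ := hfin N
  refine ⟨min c 1, lt_min hc one_pos, fun q hq p => ?_⟩
  have hq' : (0 : ℝ) < q := by exact_mod_cast hq
  rcases lt_or_ge q N with hqN | hqN
  · exact (mul_le_mul_of_nonneg_right (min_le_left _ _) (by positivity)).trans (h q hq hqN p)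
  · refine (mul_le_mul_of_nonneg_right (min_le_right _ _) (by positivity)).trans ?_
    have h1 := (hN q hqN p).le
    have h2 : |(q : ℝ) * ξ - p| = q * |ξ - p / q| := by
      rw [← abs_of_pos hq', ← abs_mul, abs_of_pos hq']
      congr 1
      field_simp
    rw [one_mul, h2, Real.rpow_sub hq', Real.rpow_one, div_eq_mul_one_div]
    gcongr

/-- A consequence of Dirichlet's theorem. -/
lemma two_le_of_mem_expSet {ξ μ : ℝ} (hξ : Irrational ξ) (hμ : μ ∈ expSet ξ) : 2 ≤ μ := by
  obtain ⟨c, hc, h⟩ := exists_lower_bound hξ hμ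
  by_contra! hlt
  -- truncation at `0` makes `k ^ (-ν)` nonincreasing in `k`
  set ν : ℝ := max (μ - 1) 0
  have hν1 : ν < 1 := max_lt (by linarith) one_pos
  have hev : ∀ᶠ N : ℕ in atTop, 1 / c < (N : ℝ) ^ (1 - ν) :=
    ((tendsto_rpow_atTop (sub_pos.mpr hν1)).comp tendsto_natCast_atTop_atTop).eventually_gt_atTop _
  obtain ⟨N, hN, hN0⟩ := (hev.and (eventually_gt_atTop 0)).exists
  obtain ⟨j, k, hk0, hkN, hjk⟩ := Real.exists_int_int_abs_mul_sub_le ξ hN0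
  lift k to ℕ using hk0.le
  have hk1 : 1 ≤ k := by omega
  have hkN' : (k : ℝ) ≤ N := by exact_mod_cast hkN
  have hk1' : (1 : ℝ) ≤ k := by exact_mod_cast hk1
  have hN0' : (0 : ℝ) < N := by exact_mod_cast hN0
  have h1 := h k hk1 j
  have h2 : (N : ℝ) ^ (-ν) ≤ (k : ℝ) ^ (1 - μ) :=
    calc (N : ℝ) ^ (-ν) ≤ (k : ℝ) ^ (-ν) :=
          Real.rpow_le_rpow_of_nonpos (by linarith) hkN' (by simp [ν])
      _ ≤ (k : ℝ) ^ (1 - μ) := Real.rpow_le_rpow_of_exponent_le hk1' (by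
          have := le_max_left (μ - 1) 0
          change -ν ≤ _
          linarith)
  have h3 : c * (N : ℝ) ^ (-ν) ≤ 1 / N := by
    calc c * (N : ℝ) ^ (-ν) ≤ c * (k : ℝ) ^ (1 - μ) := by gcongr
      _ ≤ 1 / (N + 1) := h1.trans (by exact_mod_cast hjk)
      _ ≤ 1 / N := by gcongr; linarith
  have h4 : (N : ℝ) ^ (1 - ν) = N * (N : ℝ) ^ (-ν) := by
    rw [sub_eq_add_neg, Real.rpow_add hN0', Real.rpow_one]
  rw [le_div_iff₀ hN0'] at h3
  rw [div_lt_iff₀ hc, h4] at hN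
  linarith

/-- The lower bound for `τ'''`. The fraction fed into `exists_near` is a Dirichlet approximation
with denominator at most `⌈Q ^ s / ε⌉`. The factor `Q ^ s` makes `|δ|` negligible compared with `ε`,
and it is small enough for `1/|δ| + q` to stay negligible compared with `Q`. -/
lemma mem_TSet''' {ξ μ τ : ℝ} (hξ : Irrational ξ) (hμ : μ ∈ expSet ξ) (hτ : 0 < τ)
    (h : τ * (μ - 1) < 1) : τ ∈ TSet''' ξ := by
  refine ⟨hτ, fun Q ε hQ hε hQt hεt ⟨δ, hδ, hεδ⟩ => ?_⟩
  obtain ⟨c, hc, hlow⟩ := exists_lower_bound hξ hμ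
  have hν1 : 1 ≤ μ - 1 := by linarith [two_le_of_mem_expSet hξ hμ]
  set ν := μ - 1 with hν
  -- room for two losses of `Q ^ s`
  obtain ⟨s, hs0, hs⟩ : ∃ s > 0, (τ + 2 * s) * ν < 1 := by
    refine ⟨(1 - τ * ν) / (4 * ν), by apply div_pos <;> linarith, ?_⟩
    have : (τ + 2 * ((1 - τ * ν) / (4 * ν))) * ν = τ * ν + (1 - τ * ν) / 2 := by
      field_simp; ring
    linarith
  set N : ℕ → ℕ := fun n => ⌈Q n ^ s / ε n⌉₊ with hNdef
  have hN0 : ∀ n, 0 < N n := fun n => Nat.ceil_pos.mpr (div_pos (Real.rpow_pos_of_pos (hQ n) s) (hε n))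
  have key : ∀ n, ∃ u v : ℤ, |(u : ℝ) - Q n| ≤ (1 / c + 1) * (N n : ℝ) ^ ν ∧
      |(u : ℝ) * ξ - v - ε n| ≤ ε n * Q n ^ (-s) := by
    intro n
    obtain ⟨r, hr1, hr2⟩ := Real.exists_rat_abs_sub_le_and_den_le ξ (hN0 n)
    have hden : (0 : ℝ) < r.den := by exact_mod_cast r.den_pos
    have hden1 : (1 : ℝ) ≤ r.den := by exact_mod_cast r.den_pos
    have hdN : (r.den : ℝ) ≤ N n := by exact_mod_cast hr2
    have hN1 : (1 : ℝ) ≤ N n := by exact_mod_cast hN0 n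
    have hne : (r.den : ℝ) * ξ - r.num ≠ 0 := by
      have := mul_sub_ne_zero hξ (u := r.den) (by exact_mod_cast r.den_ne_zero) r.num
      exact_mod_cast this
    obtain ⟨u, v, hu, hv⟩ := exists_near r hne (Q n) (ε n)
    have hl := hlow r.den r.den_pos r.num
    refine ⟨u, v, hu.trans ?_, hv.trans ?_⟩
    · have h1 : 1 / |(r.den : ℝ) * ξ - r.num| ≤ 1 / c * (N n : ℝ) ^ ν := by
        have h2 : c * (N n : ℝ) ^ (-ν) ≤ |(r.den : ℝ) * ξ - r.num| := by
          refine le_trans ?_ hl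
          rw [show 1 - μ = -ν by rw [hν]; ring]
          exact mul_le_mul_of_nonneg_left
            (Real.rpow_le_rpow_of_nonpos hden hdN (by linarith)) hc.le
        calc 1 / |(r.den : ℝ) * ξ - r.num| ≤ 1 / (c * (N n : ℝ) ^ (-ν)) :=
              one_div_le_one_div_of_le (by positivity) h2
          _ = 1 / c * (N n : ℝ) ^ ν := by
              rw [Real.rpow_neg (by positivity)]; field_simp
      have h2 : (r.den : ℝ) ≤ (N n : ℝ) ^ ν :=
        hdN.trans (Real.self_le_rpow_of_one_le hN1 hν1)
      linarith
    · have h1 : |(r.den : ℝ) * ξ - r.num| = r.den * |ξ - r| := by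
        rw [← abs_of_pos hden, ← abs_mul, abs_of_pos hden]
        congr 1
        rw [Rat.cast_def]
        field_simp
      have h2 : Q n ^ s / ε n ≤ N n := Nat.le_ceil _
      have hQs : 0 < Q n ^ s := Real.rpow_pos_of_pos (hQ n) s
      have hεn := hε n
      calc |(r.den : ℝ) * ξ - r.num| ≤ r.den * (1 / ((N n + 1) * r.den)) := by rw [h1]; gcongr
        _ = 1 / (N n + 1) := by field_simp
        _ ≤ 1 / (Q n ^ s / ε n) := by
            apply one_div_le_one_div_of_le (by positivity); linarith
        _ = ε n * Q n ^ (-s) := by rw [Real.rpow_neg (hQ n).le]; field_simp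
  choose u v hu hv using key
  refine ⟨u, v, ?_, ?_⟩
  · have hbound : ∀ᶠ n in atTop, |(u n : ℝ) / Q n - 1| ≤
        ((1 / c + 1) * 2 ^ ν) * Q n ^ (-(1 - (τ + 2 * s) * ν)) := by
      filter_upwards [hQt.eventually_ge_atTop 1, hδ.eventually (eventually_gt_nhds
        (show -s < 0 by linarith)), hεt.eventually (eventually_le_nhds one_pos)] with n h1 h2 h3
      have hεn := hε n
      have h4 : Q n ^ (-(τ + s)) ≤ ε n :=
        (Real.rpow_le_rpow_of_exponent_le h1 (by linarith)).trans (hεδ n)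
      have hx : 1 ≤ Q n ^ s / ε n := by
        rw [le_div_iff₀ hεn, one_mul]
        exact h3.trans (Real.one_le_rpow h1 hs0.le)
      have h5 : Q n ^ s / ε n ≤ Q n ^ (τ + 2 * s) := by
        rw [div_le_iff₀ hεn]
        calc Q n ^ s = Q n ^ (τ + 2 * s) * Q n ^ (-(τ + s)) := by
              rw [← Real.rpow_add (hQ n)]; ring_nf
          _ ≤ _ := by gcongr
      have h6 : (N n : ℝ) ≤ 2 * Q n ^ (τ + 2 * s) := by
        have := (Nat.ceil_lt_add_one (by linarith : 0 ≤ Q n ^ s / ε n)).le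
        change (N n : ℝ) ≤ _ at this
        linarith
      have hQn := hQ n
      calc |(u n : ℝ) / Q n - 1| = |(u n : ℝ) - Q n| / Q n := by
            rw [div_sub_one hQn.ne', abs_div, abs_of_pos hQn]
        _ ≤ (1 / c + 1) * (2 * Q n ^ (τ + 2 * s)) ^ ν / Q n := by
            have := hu n
            have : (N n : ℝ) ^ ν ≤ (2 * Q n ^ (τ + 2 * s)) ^ ν := by gcongr
            have hc' : 0 < 1 / c + 1 := by positivity
            gcongr
            exact (hu n).trans (by gcongr)
        _ = _ := by
            rw [Real.mul_rpow (by norm_num) (by positivity), ← Real.rpow_mul hQn.le, neg_sub,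
              Real.rpow_sub_one hQn.ne']
            ring
    have hlim : Tendsto (fun n => ((1 / c + 1) * 2 ^ ν) * Q n ^ (-(1 - (τ + 2 * s) * ν)))
        atTop (𝓝 0) := by
      simpa using ((tendsto_rpow_neg_atTop (sub_pos.mpr hs)).comp hQt).const_mul
        ((1 / c + 1) * 2 ^ ν)
    exact tendsto_sub_nhds_zero_iff.mp (squeeze_zero_norm' hbound hlim)
  · refine tendsto_sub_nhds_zero_iff.mp (squeeze_zero_norm (a := fun n => Q n ^ (-s)) ?_
      ((tendsto_rpow_neg_atTop hs0).comp hQt))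
    intro n
    rw [Real.norm_eq_abs, div_sub_one (hε n).ne', abs_div, abs_of_pos (hε n), div_le_iff₀ (hε n),
      mul_comm (Q n ^ (-s))]
    exact hv n

/-! ### The upper bound -/

/-- There is equality if `p/q = v/u`. Otherwise the determinant `u p - v q` is a nonzero integer,
which forces `|u| * |ξ - p/q| ≥ 1/(2q)`. -/
lemma div_le_abs_sub_div {ξ : ℝ} {u v p : ℤ} {q : ℕ} (hu : u ≠ 0) (hq : 0 < q)
    (hL : |(u : ℝ) * ξ - v| ≤ 1 / (2 * q)) :
    |(u : ℝ) * ξ - v| / |(u : ℝ)| ≤ |ξ - p / q| := by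
  have hq' : (0 : ℝ) < q := by exact_mod_cast hq
  have hu' : (u : ℝ) ≠ 0 := by exact_mod_cast hu
  have hua : 0 < |(u : ℝ)| := abs_pos.mpr hu'
  by_cases hdet : u * p = v * q
  · have hdet' : (u : ℝ) * p = v * q := by exact_mod_cast hdet
    apply le_of_eq
    rw [← abs_div]
    congr 1
    field_simp
    linear_combination hdet'
  · have h1 : (1 : ℝ) ≤ |(u : ℝ) * p - v * q| := by
      have := Int.one_le_abs (sub_ne_zero.mpr hdet)
      exact_mod_cast this
    have h2 : (u : ℝ) * p - v * q = q * (u * ξ - v) - q * (u * (ξ - p / q)) := by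
      field_simp; ring
    have h3 : |(u : ℝ) * p - v * q| ≤ q * |u * ξ - v| + q * (|(u : ℝ)| * |ξ - p / q|) := by
      rw [h2]
      refine (abs_sub _ _).trans (le_of_eq ?_)
      rw [abs_mul, abs_mul, abs_mul, abs_of_pos hq']
    rw [le_div_iff₀ (by positivity)] at hL
    rw [div_le_iff₀ hua]
    nlinarith

/-- The upper bound for `τ`. -/
lemma mem_expSet_of_mem_TSet {ξ τ μ : ℝ} (hξ : Irrational ξ) (hτ : τ ∈ TSet ξ)
    (hμ : 1 + 1 / τ < μ) : μ ∈ expSet ξ := by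
  obtain ⟨hτ0, u, v, hu, hlim, ⟨δ, hδ, hstep⟩, ⟨δ', hδ', hbd⟩⟩ := hτ
  -- With all error terms bounded by `η`, the argument below yields the exponent
  -- `(1 + η) * (1 + 1 / (τ - η))`, which tends to `1 + 1 / τ` as `η → 0`.
  obtain ⟨η, hη0, hητ, hE⟩ : ∃ η > 0, η < τ ∧ (1 + η) * (1 + 1 / (τ - η)) < μ := by
    have hc : ContinuousAt (fun η : ℝ => (1 + η) * (1 + 1 / (τ - η))) 0 := by
      refine ContinuousAt.mul (by fun_prop) (continuousAt_const.add
        (continuousAt_const.div (by fun_prop) (by simpa using hτ0.ne')))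
    have h1 : ∀ᶠ η in 𝓝 (0 : ℝ), (1 + η) * (1 + 1 / (τ - η)) < μ :=
      hc.eventually (eventually_lt_nhds (by simpa using hμ))
    have h2 := (h1.and (eventually_lt_nhds hτ0)).filter_mono (nhdsWithin_le_nhds (s := Set.Ioi 0))
    obtain ⟨η, ⟨h3, h4⟩, h5⟩ := (h2.and self_mem_nhdsWithin).exists
    exact ⟨η, h5, h4, h3⟩
  have hτη : 0 < τ - η := sub_pos.mpr hητ
  set E := (1 + η) * (1 + 1 / (τ - η)) with hEdef
  set L : ℕ → ℝ := fun n => |(u n : ℝ) * ξ - v n| with hLdef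
  have hL0 : ∀ n, 0 < L n := fun n => abs_pos.mpr (mul_sub_ne_zero hξ (hu n) (v n))
  have hLlim : Tendsto L atTop (𝓝 0) := by simpa using hlim.abs
  obtain ⟨N, hN⟩ := eventually_atTop.mp
    ((hδ.eventually (eventually_lt_nhds hη0)).and ((hδ'.eventually (eventually_lt_nhds hη0)).and
      (hLlim.eventually (eventually_lt_nhds one_pos))))
  have hq1 : ∀ᶠ q : ℕ in atTop, (2 : ℝ) ^ E < (q : ℝ) ^ (μ - E) :=
    ((tendsto_rpow_atTop (sub_pos.mpr hE)).comp tendsto_natCast_atTop_atTop).eventually_gt_atTop _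
  have hq2 : ∀ᶠ q : ℕ in atTop, 1 / L N < (q : ℝ) :=
    tendsto_natCast_atTop_atTop.eventually_gt_atTop _
  change ∀ᶠ q : ℕ in atTop, _
  filter_upwards [hq1, hq2, eventually_gt_atTop 0] with q h1 h2 hq p
  have hq' : (0 : ℝ) < q := by exact_mod_cast hq
  have hqN : 1 / (2 * (q : ℝ)) ≤ L N := by
    rw [div_lt_iff₀ (hL0 N)] at h2
    rw [div_le_iff₀ (by positivity)]
    nlinarith
  have hex : ∃ k, L (N + k) < 1 / (2 * (q : ℝ)) := by
    obtain ⟨k, hk1, hk2⟩ := ((hLlim.eventually (eventually_lt_nhds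
      (show (0 : ℝ) < 1 / (2 * (q : ℝ)) by positivity))).and (eventually_ge_atTop N)).exists
    exact ⟨k - N, by rwa [Nat.add_sub_cancel' hk2]⟩
  classical
  obtain ⟨j, hj1, hj2⟩ : ∃ j, 1 / (2 * (q : ℝ)) ≤ L (N + j) ∧ L (N + j + 1) < 1 / (2 * (q : ℝ)) := by
    have hs := Nat.find_spec hex
    have hne : Nat.find hex ≠ 0 := by
      intro h0
      rw [h0] at hs
      exact absurd hs (not_lt.mpr hqN)
    obtain ⟨j, hj⟩ := Nat.exists_eq_succ_of_ne_zero hne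
    refine ⟨j, not_lt.mp (Nat.find_min hex (by omega)), ?_⟩
    rw [hj] at hs
    exact hs
  set n := N + j + 1 with hn
  have hU1 : (1 : ℝ) ≤ |(u n : ℝ)| := by exact_mod_cast Int.one_le_abs (hu n)
  set U := |(u n : ℝ)| with hU
  have h2q : (0 : ℝ) < 2 * q := by positivity
  have hlow : (2 * (q : ℝ)) ^ (-(1 + η)) ≤ L n := by
    obtain ⟨h3, -, h4⟩ := hN (N + j) (by omega)
    calc (2 * (q : ℝ)) ^ (-(1 + η)) = (1 / (2 * (q : ℝ))) ^ (1 + η) := by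
          rw [one_div, Real.inv_rpow h2q.le, Real.rpow_neg h2q.le]
      _ ≤ L (N + j) ^ (1 + η) := by gcongr
      _ ≤ L (N + j) ^ (1 + δ (N + j)) :=
          Real.rpow_le_rpow_of_exponent_ge (hL0 _) h4.le (by linarith)
      _ = L n := (hstep (N + j)).symm
  -- `U ^ (τ - η) ≤ 1 / L n`, while `L n` is not much smaller than `1 / (2 * q)`
  have hUup : U ≤ (2 * (q : ℝ)) ^ ((1 + η) / (τ - η)) := by
    obtain ⟨-, h3, -⟩ := hN n (by omega)
    have h4 : (2 * (q : ℝ)) ^ (-(1 + η)) ≤ U ^ (-(τ - η)) :=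
      hlow.trans ((hbd n).trans (Real.rpow_le_rpow_of_exponent_le hU1 (by linarith)))
    rw [Real.rpow_neg h2q.le, Real.rpow_neg (by positivity),
      inv_le_inv₀ (by positivity) (by positivity)] at h4
    have h5 := Real.rpow_le_rpow (by positivity) h4 (inv_pos.mpr hτη).le
    rwa [← Real.rpow_mul (by positivity), mul_inv_cancel₀ hτη.ne', Real.rpow_one,
      ← Real.rpow_mul h2q.le, ← div_eq_mul_inv] at h5
  have hfin : (2 * (q : ℝ)) ^ (-E) ≤ L n / U := by
    calc (2 * (q : ℝ)) ^ (-E)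
        = (2 * (q : ℝ)) ^ (-(1 + η)) / (2 * (q : ℝ)) ^ ((1 + η) / (τ - η)) := by
          rw [← Real.rpow_sub h2q, hEdef]
          congr 1
          ring
      _ ≤ L n / U := by gcongr
  have hstrict : 1 / (q : ℝ) ^ μ < (2 * (q : ℝ)) ^ (-E) := by
    rw [Real.rpow_sub hq', lt_div_iff₀ (by positivity)] at h1
    rw [Real.rpow_neg h2q.le, ← one_div, Real.mul_rpow (by norm_num) hq'.le]
    exact one_div_lt_one_div_of_lt (by positivity) h1
  exact hstrict.trans_le (hfin.trans (div_le_abs_sub_div (hu n) hq hj2.le))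

/-! ### The inclusions between the four sets -/

/-- The relation `a_n = b_n^{c+o(1)}` in terms of logarithms; indices with `b_n = 1` have to be
treated apart, because the exponent has no effect there. -/
lemma exists_exponent_eq {a b : ℕ → ℝ} {c : ℝ} (ha : ∀ n, 0 < a n) (hb : ∀ n, 0 < b n)
    (hab : ∀ n, b n = 1 → a n = 1)
    (h : Tendsto (fun n => Real.log (a n) / Real.log (b n)) atTop (𝓝 c)) :
    ∃ δ : ℕ → ℝ, Tendsto δ atTop (𝓝 0) ∧ ∀ n, a n = b n ^ (c + δ n) := by
  refine ⟨fun n => Real.log (a n) / Real.log (b n) - c, by simpa using h.sub_const c, fun n => ?_⟩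
  by_cases hb1 : b n = 1
  · rw [hab n hb1, hb1, Real.one_rpow]
  · rw [add_sub_cancel]
    exact (Real.rpow_logb (hb n) hb1 (ha n)).symm

/-- If `a_n ≤ b_n^{c+η}` eventually for each `η > 0`, then `a_n ≤ b_n^{c+o(1)}`. Again the indices
with `b_n = 1` need a separate hypothesis. -/
lemma exists_exponent_le {a b : ℕ → ℝ} {c : ℝ} (ha : ∀ n, 0 < a n) (hb : ∀ n, 1 ≤ b n)
    (hab : ∀ n, b n = 1 → a n ≤ 1)
    (h : ∀ η > 0, ∀ᶠ n in atTop, a n ≤ b n ^ (c + η)) :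
    ∃ δ : ℕ → ℝ, Tendsto δ atTop (𝓝 0) ∧ ∀ n, a n ≤ b n ^ (c + δ n) := by
  classical
  refine ⟨fun n => if b n = 1 then 0 else max 0 (Real.log (a n) / Real.log (b n) - c), ?_, ?_⟩
  · rw [Metric.tendsto_atTop']
    intro η hη
    obtain ⟨N, hN⟩ := eventually_atTop.mp (h (η / 2) (by linarith))
    refine ⟨N, fun n hn => ?_⟩
    have h1 := hN n hn.le
    rw [Real.dist_0_eq_abs]
    split_ifs with hb1
    · simpa using hη
    · have hlog : 0 < Real.log (b n) := Real.log_pos (lt_of_le_of_ne (hb n) (Ne.symm hb1))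
      have h2 := Real.log_le_log (ha n) h1
      rw [Real.log_rpow (by linarith [hb n]), ← div_le_iff₀ hlog] at h2
      rw [abs_of_nonneg (le_max_left _ _)]
      exact max_lt hη (by linarith)
  · intro n
    by_cases hb1 : b n = 1
    · rw [hb1, Real.one_rpow]
      exact hab n hb1
    · have hbn : 1 < b n := lt_of_le_of_ne (hb n) (Ne.symm hb1)
      simp only [hb1, if_false]
      calc a n = b n ^ (Real.log (a n) / Real.log (b n)) :=
            (Real.rpow_logb (by linarith) hb1 (ha n)).symm
        _ ≤ _ := Real.rpow_le_rpow_of_exponent_le hbn.le (by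
            linarith [le_max_right 0 (Real.log (a n) / Real.log (b n) - c)])

/-- The choice `ε_n = Q_n^{-τ}`. -/
lemma TSet'''_subset (ξ : ℝ) : TSet''' ξ ⊆ TSet'' ξ := by
  rintro τ ⟨hτ, h⟩
  refine ⟨hτ, fun Q hQm hQ0 => ?_⟩
  have hQ0' : ∀ n, (0 : ℝ) < Q n := fun n => by exact_mod_cast hQ0 n
  have hQt : Tendsto (fun n => (Q n : ℝ)) atTop atTop :=
    tendsto_natCast_atTop_atTop.comp hQm.tendsto_atTop
  obtain ⟨u, v, hu, hv⟩ := h (fun n => Q n) (fun n => (Q n : ℝ) ^ (-τ)) hQ0'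
    (fun n => Real.rpow_pos_of_pos (hQ0' n) _) hQt ((tendsto_rpow_neg_atTop hτ).comp hQt)
    ⟨fun _ => 0, tendsto_const_nhds, fun n => by simp⟩
  classical
  -- At the finitely many indices which are not good, `(u, v) = (0, 1)` is used instead. This covers
  -- `Q n = 1`, where `T''` requires `|u ξ - v| = 1`.
  let good : ℕ → Prop := fun n => 2 ≤ Q n ∧ |(u n : ℝ)| ≤ 2 * Q n ∧ 0 < |(u n : ℝ) * ξ - v n|
  have hgood : ∀ᶠ n in atTop, good n := by
    filter_upwards [hQm.tendsto_atTop.eventually_ge_atTop 2,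
      hu.abs.eventually (eventually_le_nhds (show |(1 : ℝ)| < 2 by norm_num)),
      hv.eventually (eventually_gt_nhds one_pos)] with n h1 h2 h3
    refine ⟨h1, ?_, abs_pos.mpr fun h0 => ?_⟩
    · rwa [abs_div, abs_of_pos (hQ0' n), div_le_iff₀ (hQ0' n)] at h2
    · rw [h0, zero_div] at h3
      exact lt_irrefl _ h3
  have hlogQ : Tendsto (fun n => Real.log (Q n)) atTop atTop := Real.tendsto_log_atTop.comp hQt
  refine ⟨fun n => if good n then u n else 0, fun n => if good n then v n else 1,
    ⟨fun n => Real.log 2 / Real.log (Q n), hlogQ.const_div_atTop _, fun n => ?_⟩, ?_⟩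
  · by_cases hg : good n
    · simp only [hg, if_true]
      have hQ1 : (Q n : ℝ) ≠ 1 := by
        have := hg.1
        exact_mod_cast (by omega : Q n ≠ 1)
      have h2 : (Q n : ℝ) ^ (Real.log 2 / Real.log (Q n)) = 2 :=
        Real.rpow_logb (hQ0' n) hQ1 two_pos
      rw [Real.rpow_add (hQ0' n), Real.rpow_one, h2, mul_comm]
      exact hg.2.1
    · simp only [hg, if_false, Int.cast_zero, abs_zero]
      exact (Real.rpow_pos_of_pos (hQ0' n) _).le
  · apply exists_exponent_eq
    · intro n
      by_cases hg : good n
      · simpa only [hg, if_true] using hg.2.2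
      · simp [hg]
    · exact hQ0'
    · intro n hn
      have hg : ¬ good n := by
        intro hg
        have : Q n = 1 := by exact_mod_cast hn
        have := hg.1
        omega
      simp [hg]
    · have h1 : Tendsto (fun n => -τ + Real.log (((u n : ℝ) * ξ - v n) / (Q n : ℝ) ^ (-τ)) /
          Real.log (Q n)) atTop (𝓝 (-τ)) := by
        have h2 := ((Real.continuousAt_log one_ne_zero).tendsto.comp hv).div_atTop hlogQ
        simpa using h2.const_add (-τ)
      refine h1.congr' ?_
      filter_upwards [hgood] with n hg
      have hl : Real.log (Q n) ≠ 0 := (Real.log_pos (by exact_mod_cast hg.1)).ne'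
      simp only [hg, if_true]
      rw [Real.log_abs, Real.log_div (abs_pos.mp hg.2.2) (Real.rpow_pos_of_pos (hQ0' n) _).ne',
        Real.log_rpow (hQ0' n)]
      field_simp
      ring

/-- The choice `Q_n = 2^n`, with `α = 2^{-τ}` and `β = 2`. -/
lemma TSet''_subset (ξ : ℝ) : TSet'' ξ ⊆ TSet' ξ := by
  rintro τ ⟨hτ, h⟩
  obtain ⟨u, v, ⟨δ, hδ, hu⟩, ⟨δ', hδ', hv⟩⟩ := h (fun n => 2 ^ n)
    (pow_right_strictMono₀ one_lt_two) (fun n => by positivity)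
  have hroot : ∀ (x : ℝ) (n : ℕ), n ≠ 0 → (((2 ^ n : ℕ) : ℝ) ^ x) ^ (1 / (n : ℝ)) = 2 ^ x := by
    intro x n hn
    have hn' : (n : ℝ) ≠ 0 := by exact_mod_cast hn
    push_cast
    rw [← Real.rpow_natCast, ← Real.rpow_mul (by norm_num), ← Real.rpow_mul (by norm_num)]
    congr 1
    field_simp
  have hcont : ∀ {e : ℕ → ℝ} {x : ℝ}, Tendsto e atTop (𝓝 0) →
      Tendsto (fun n => (2 : ℝ) ^ (x + e n)) atTop (𝓝 (2 ^ x)) := by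
    intro e x he
    have h1 : Tendsto (fun n => x + e n) atTop (𝓝 x) := by simpa using he.const_add x
    exact ((Real.continuous_const_rpow (by norm_num)).tendsto x).comp h1
  refine ⟨hτ, u, v, 2 ^ (-τ), 2, by positivity,
    Real.rpow_lt_one_of_one_lt_of_neg one_lt_two (by linarith), one_lt_two, ?_, ?_, ?_⟩
  · refine (hcont (x := -τ) hδ').congr' ?_
    filter_upwards [eventually_ne_atTop 0] with n hn
    rw [hv n, hroot _ n hn]
  · have h1 : Tendsto (fun n => (((2 : ℝ) ^ (1 + δ n) : ℝ) : EReal)) atTop (𝓝 ((2 : ℝ) : EReal)) := by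
      have := hcont (x := 1) hδ
      rw [Real.rpow_one] at this
      exact (continuous_coe_real_ereal.tendsto 2).comp this
    rw [← h1.limsup_eq]
    refine limsup_le_limsup ?_
    filter_upwards [eventually_ne_atTop 0] with n hn
    rw [EReal.coe_le_coe_iff, ← hroot _ n hn]
    exact Real.rpow_le_rpow (abs_nonneg _) (hu n) (by positivity)
  · rw [Real.log_rpow two_pos]
    have : Real.log 2 ≠ 0 := (Real.log_pos one_lt_two).ne'
    field_simp

/-- From `log |u_n ξ - v_n| ~ n log α` consecutive logarithms have ratio tending to `1`, and with
`log |u_n| ≤ (1 + o(1)) n log β` one gets the bound in `T`. Only a tail of the sequences is kept,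
to ensure `u_n ≠ 0` and `0 < |u_n ξ - v_n| < 1`. -/
lemma TSet'_subset (ξ : ℝ) : TSet' ξ ⊆ TSet ξ := by
  rintro τ ⟨hτ, u, v, α, β, hα0, hα1, hβ, hlim, hsup, hτeq⟩
  set L : ℕ → ℝ := fun n => |(u n : ℝ) * ξ - v n| with hLdef
  have hlogβ : 0 < Real.log β := Real.log_pos hβ
  have hlogα : Real.log α = -(τ * Real.log β) := by
    rw [hτeq]; field_simp
  have hpos : ∀ᶠ n in atTop, 0 < L n := by
    filter_upwards [hlim.eventually (eventually_gt_nhds hα0), eventually_ne_atTop 0] with n h1 h2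
    rcases (abs_nonneg ((u n : ℝ) * ξ - v n)).eq_or_lt with h0 | h0
    · rw [← h0, Real.zero_rpow (by positivity)] at h1
      exact absurd h1 (lt_irrefl _)
    · exact h0
  have hlogL : Tendsto (fun n => Real.log (L n) / n) atTop (𝓝 (Real.log α)) := by
    refine ((Real.continuousAt_log hα0.ne').tendsto.comp hlim).congr' ?_
    filter_upwards [hpos] with n hn
    simp only [Function.comp_apply]
    rw [Real.log_rpow hn]
    ring
  have hnat : Tendsto (fun n : ℕ => (n : ℝ)) atTop atTop := tendsto_natCast_atTop_atTop
  have hlogL' : Tendsto (fun n => Real.log (L n)) atTop atBot := by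
    refine (hlogL.neg_mul_atTop (Real.log_neg hα0 hα1) hnat).congr' ?_
    filter_upwards [eventually_ne_atTop 0] with n hn
    field_simp
  have hL1 : ∀ᶠ n in atTop, L n < 1 := by
    filter_upwards [hpos, hlogL'.eventually_lt_atBot 0] with n h1 h2
    exact (Real.log_neg_iff h1).mp h2
  have hLlim : Tendsto L atTop (𝓝 0) := by
    refine (Real.tendsto_exp_atBot.comp hlogL').congr' ?_
    filter_upwards [hpos] with n hn
    exact Real.exp_log hn
  have hratio : Tendsto (fun n => Real.log (L (n + 1)) / Real.log (L n)) atTop (𝓝 1) := by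
    have h1 := (hlogL.comp (tendsto_add_atTop_nat 1)).div hlogL (Real.log_neg hα0 hα1).ne
    have h2 : Tendsto (fun n : ℕ => 1 + 1 / (n : ℝ)) atTop (𝓝 1) := by
      simpa using (tendsto_one_div_atTop_nhds_zero_nat (𝕜 := ℝ)).const_add 1
    have h3 := h1.mul h2
    rw [div_self (Real.log_neg hα0 hα1).ne, one_mul] at h3
    refine h3.congr' ?_
    filter_upwards [eventually_ne_atTop 0, hlogL'.eventually_lt_atBot 0] with n hn hl
    have hl' := hl.ne
    have hn' : (n : ℝ) ≠ 0 := by exact_mod_cast hn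
    have hn1 : (n : ℝ) + 1 ≠ 0 := by positivity
    simp only [Function.comp_apply, Pi.div_apply]
    push_cast
    field_simp
  have hu0 : ∀ n, 0 < L n → L n < 1 → u n ≠ 0 := by
    intro n h1 h2 h0
    simp only [hLdef, h0, Int.cast_zero, zero_mul, zero_sub, abs_neg] at h1 h2
    have h3 : 0 < |v n| := by exact_mod_cast h1
    have h4 : |v n| < 1 := by exact_mod_cast h2
    omega
  have hbd : ∀ η > 0, ∀ᶠ n in atTop, L n ≤ |(u n : ℝ)| ^ (-τ + η) := by
    intro η hη
    -- `θ` is the required exponent `τ - η`, kept positive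
    set θ := max (τ - η) (τ / 2) with hθ
    have hθ0 : 0 < θ := lt_max_of_lt_right (by linarith)
    have hθτ : θ < τ := max_lt (by linarith) (by linarith)
    -- `a` lies between `θ log β` and `-log α = τ log β`, so that eventually `log |u_n| < n a / θ` and
    -- `log |u_n ξ - v_n| < -n a`
    obtain ⟨a, ha1, ha2⟩ := exists_between (mul_lt_mul_of_pos_right hθτ hlogβ)
    have hb : β < Real.exp (a / θ) := by
      rw [← Real.log_lt_iff_lt_exp (by linarith), lt_div_iff₀ hθ0]
      linarith
    have hev := eventually_lt_of_limsup_lt (hsup.trans_lt (EReal.coe_lt_coe_iff.mpr hb))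
    filter_upwards [hpos, hL1, hev, eventually_gt_atTop 0,
      hlogL.eventually (eventually_lt_nhds (show Real.log α < -a by linarith))]
      with n h1 h2 h3 h4 h5
    have hn : (0 : ℝ) < n := by exact_mod_cast h4
    have hU1 : (1 : ℝ) ≤ |(u n : ℝ)| := by exact_mod_cast Int.one_le_abs (hu0 n h1 h2)
    have hU0 : 0 < |(u n : ℝ)| := by linarith
    rw [EReal.coe_lt_coe_iff, ← Real.log_lt_iff_lt_exp (by positivity), Real.log_rpow hU0,
      lt_div_iff₀ hθ0, one_div, inv_mul_eq_div, div_mul_eq_mul_div, div_lt_iff₀ hn] at h3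
    rw [div_lt_iff₀ hn] at h5
    calc L n ≤ |(u n : ℝ)| ^ (-θ) := by
          rw [← Real.log_le_log_iff h1 (by positivity), Real.log_rpow hU0]
          linarith
      _ ≤ _ := Real.rpow_le_rpow_of_exponent_le hU1 (by
          have := le_max_left (τ - η) (τ / 2)
          linarith)
  obtain ⟨N, hN⟩ := eventually_atTop.mp (hpos.and hL1)
  have hN' : ∀ n, 0 < L (n + N) ∧ L (n + N) < 1 := fun n => hN (n + N) (by omega)
  have hun : ∀ n, u (n + N) ≠ 0 := fun n => hu0 _ (hN' n).1 (hN' n).2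
  refine ⟨hτ, fun n => u (n + N), fun n => v (n + N), hun, ?_, ?_, ?_⟩
  · exact (tendsto_add_atTop_iff_nat N).mpr (tendsto_zero_iff_abs_tendsto_zero _ |>.mpr hLlim)
  · apply exists_exponent_eq (a := fun n => L (n + 1 + N)) (b := fun n => L (n + N))
    · exact fun n => (hN' (n + 1)).1
    · exact fun n => (hN' n).1
    · exact fun n hn => absurd hn (hN' n).2.ne
    · refine (hratio.comp (tendsto_add_atTop_nat N)).congr fun n => ?_
      simp only [Function.comp_apply]
      rw [Nat.add_right_comm]
  · apply exists_exponent_le (a := fun n => L (n + N))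
    · exact fun n => (hN' n).1
    · exact fun n => by exact_mod_cast Int.one_le_abs (hun n)
    · exact fun n _ => (hN' n).2.le
    · exact fun η hη => (tendsto_add_atTop_nat N).eventually (hbd η hη)

/-! ### The common supremum -/

lemma sSup_eq {ξ : ℝ} (hξ : Irrational ξ) {X : Set ℝ} (h1 : TSet''' ξ ⊆ X) (h2 : X ⊆ TSet ξ)
    (hne : (expSet ξ).Nonempty) : sSup X = (sInf (expSet ξ) - 1)⁻¹ := by
  have hbdd : BddBelow (expSet ξ) := ⟨2, fun μ hμ => two_le_of_mem_expSet hξ hμ⟩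
  have h2le : 2 ≤ sInf (expSet ξ) := le_csInf hne fun μ hμ => two_le_of_mem_expSet hξ hμ
  set m := sInf (expSet ξ) with hm
  have hm0 : 0 < m - 1 := by linarith
  have hlow : ∀ τ, 0 < τ → τ < (m - 1)⁻¹ → τ ∈ X := by
    intro τ hτ hlt
    have : m < 1 + τ⁻¹ := by
      have := (lt_inv_comm₀ hτ hm0).mp hlt
      linarith
    obtain ⟨μ, hμ, hμlt⟩ := exists_lt_of_csInf_lt hne this
    refine h1 (mem_TSet''' hξ hμ hτ ?_)
    have h3 : μ - 1 < τ⁻¹ := by linarith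
    calc τ * (μ - 1) < τ * τ⁻¹ := by gcongr
      _ = 1 := mul_inv_cancel₀ hτ.ne'
  have hinv : 0 < (m - 1)⁻¹ := inv_pos.mpr hm0
  refine csSup_eq_of_forall_le_of_forall_lt_exists_gt
    ⟨(m - 1)⁻¹ / 2, hlow _ (by linarith) (by linarith)⟩ ?_ ?_
  · intro τ hτ
    have hτT := h2 hτ
    have hτ0 : 0 < τ := hτT.1
    have h3 : m ≤ 1 + 1 / τ := le_of_forall_gt_imp_ge_of_dense fun μ hμ =>
      csInf_le hbdd (mem_expSet_of_mem_TSet hξ hτT hμ)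
    rw [le_inv_comm₀ hτ0 hm0, inv_eq_one_div]
    linarith
  · intro w hw
    obtain ⟨x, hx1, hx2⟩ := exists_between (max_lt hw hinv)
    exact ⟨x, hlow x ((le_max_right _ _).trans_lt hx1) hx2, (le_max_left _ _).trans_lt hx1⟩

lemma sSup_eq_zero {ξ : ℝ} (hξ : Irrational ξ) {X : Set ℝ} (h2 : X ⊆ TSet ξ)
    (hemp : expSet ξ = ∅) : sSup X = 0 := by
  have : X = ∅ := by
    rw [Set.eq_empty_iff_forall_notMem]
    intro τ hτ
    have := mem_expSet_of_mem_TSet hξ (h2 hτ) (lt_add_one _)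
    rw [hemp] at this
    exact this
  rw [this, Real.sSup_empty]

lemma irrationalityExponent_eq (ξ : ℝ) :
    irrationalityExponent ξ = sInf ((fun x : ℝ => (x : EReal)) '' expSet ξ) := by
  unfold irrationalityExponent
  congr 1
  ext x
  constructor
  · rintro ⟨μ, rfl, h⟩
    exact ⟨μ, h, rfl⟩
  · rintro ⟨μ, h, rfl⟩
    exact ⟨μ, rfl, h⟩

end TauExp

theorem tau_exponents_eq (ξ : ℝ) (hξ : Irrational ξ) :
    tauExp''' ξ = tauExp'' ξ ∧ tauExp'' ξ = tauExp' ξ ∧ tauExp' ξ = tauExp ξ ∧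
    ((tauExp ξ : ℝ) : EReal) = (irrationalityExponent ξ - 1)⁻¹ ∧
    tauExp ξ ∈ Set.Icc (0 : ℝ) 1 := by
  have h32 := TauExp.TSet'''_subset ξ
  have h21 := TauExp.TSet''_subset ξ
  have h10 := TauExp.TSet'_subset ξ
  unfold tauExp''' tauExp'' tauExp' tauExp
  rcases (TauExp.expSet ξ).eq_empty_or_nonempty with hemp | hne
  · rw [TauExp.sSup_eq_zero hξ (h32.trans (h21.trans h10)) hemp,
      TauExp.sSup_eq_zero hξ (h21.trans h10) hemp, TauExp.sSup_eq_zero hξ h10 hemp,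
      TauExp.sSup_eq_zero hξ subset_rfl hemp, TauExp.irrationalityExponent_eq, hemp]
    refine ⟨rfl, rfl, rfl, ?_, by simp⟩
    rw [Set.image_empty, sInf_empty, show ((⊤ : EReal) - 1) = ⊤ from rfl, EReal.inv_top]
    rfl
  · rw [TauExp.sSup_eq hξ subset_rfl (h32.trans (h21.trans h10)) hne,
      TauExp.sSup_eq hξ h32 (h21.trans h10) hne, TauExp.sSup_eq hξ (h32.trans h21) h10 hne,
      TauExp.sSup_eq hξ (h32.trans (h21.trans h10)) subset_rfl hne,
      TauExp.irrationalityExponent_eq]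
    have hbdd : BddBelow (TauExp.expSet ξ) := ⟨2, fun μ hμ => TauExp.two_le_of_mem_expSet hξ hμ⟩
    have h2le : 2 ≤ sInf (TauExp.expSet ξ) :=
      le_csInf hne fun μ hμ => TauExp.two_le_of_mem_expSet hξ hμ
    have hcoe : sInf ((fun x : ℝ => (x : EReal)) '' TauExp.expSet ξ) =
        ((sInf (TauExp.expSet ξ) : ℝ) : EReal) := by
      symm
      exact Monotone.map_csInf_of_continuousAt continuous_coe_real_ereal.continuousAt
        EReal.coe_strictMono.monotone hne hbdd
    refine ⟨rfl, rfl, rfl, ?_, ?_, ?_⟩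
    · rw [hcoe, EReal.coe_inv, EReal.coe_sub, EReal.coe_one]
    · exact inv_nonneg.mpr (by linarith)
    · exact inv_le_one_of_one_le₀ (by linarith)
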